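/- Let F̄ = {z ∈ ℍ² : |Re z| ≤ 1/2 and |z| ≥ 1} be the closure of the standard fundamental domain of SL(2,ℤ), and let Γ₁ = {I, T, L, S} ⊆ SL(2,ℤ) where T = (1 1; 0 1), L = (1 0; 1 1), and S = (0 −1; 1 0). Then for all z₁, z₂ ∈ F̄, inf_{γ ∈ SL(2,ℤ)} d(z₁, γ·z₂) = min_{γ₁, γ₂ ∈ Γ₁} d(γ₁·z₁, γ₂·z₂). -/

import Mathlib

open scoped UpperHalfPlane MatrixGroups

noncomputable section

instance : DecidableEq SL(2, ℤ) :=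
  fun a b => decidable_of_iff (a.1 = b.1) (by
    constructor
    · intro h; exact Subtype.ext h
    · intro h; exact congrArg _ h)

/-- The closure of the standard fundamental domain of the modular group:
`{z ∈ ℍ² : |Re z| ≤ 1/2 and |z| ≥ 1}`. -/
def modularFundClosure : Set ℍ :=
  {z | |z.re| ≤ 1 / 2 ∧ 1 ≤ ‖(z : ℂ)‖}

/-- `T = (1 1; 0 1)`. -/
def Tmat : SL(2, ℤ) := ⟨!![1, 1; 0, 1], by norm_num [Matrix.det_fin_two_of]⟩

/-- `L = (1 0; 1 1)`. -/
def Lmat : SL(2, ℤ) := ⟨!![1, 0; 1, 1], by norm_num [Matrix.det_fin_two_of]⟩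

/-- `S = (0 −1; 1 0)`. -/
def Smat : SL(2, ℤ) := ⟨!![0, -1; 1, 0], by norm_num [Matrix.det_fin_two_of]⟩

/-!
Modulo sign, an element of `SL(2, ℤ)` with lower-left entry `c = 0` is a power of `T`, and one with
`c = 1` is `T ^ a * S * T ^ d`. In the first case only `a ∈ {0, 1, -1}` can minimise the distance.
In the second, the distance is `dist (T ^ (-a) • z) (S • T ^ d • w)`, whose hyperbolic cosine is a
quadratic polynomial in the real part of either translate; since `im ≥ √3 / 2` on the fundamental
domain, both exponents can be shrunk to their signs. The remaining words are `S`, `T * S * T = L`,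
`T⁻¹ * S * T⁻¹ = -L⁻¹`, and words which are beaten by `1` because `|z|, |w| ≥ 1`. Finally, if
`|c| ≥ 2` then `γ • w` lies so low that some horizontal translate of `w` is closer to `z`.
-/

section Distance

open UpperHalfPlane ModularGroup Complex

instance isIsometricSMul_specialLinearGroup {R : Type*} [CommRing R] [Algebra R ℝ] :
    IsIsometricSMul SL(2, R) ℍ where
  isometry_smul g := isometry_smul ℍ (Matrix.SpecialLinearGroup.map (algebraMap R ℝ) g)

lemma dist_smul_eq_dist_inv_smul {G X : Type*} [Group G] [PseudoMetricSpace X] [MulAction G X]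
    [IsIsometricSMul G X] (g : G) (x y : X) : dist x (g • y) = dist (g⁻¹ • x) y := by
  rw [← dist_smul g (g⁻¹ • x) y, smul_inv_smul]

lemma dist_le_dist_iff_cosh_le_cosh {X Y : Type*} [PseudoMetricSpace X] [PseudoMetricSpace Y]
    {x x' : X} {y y' : Y} :
    dist x x' ≤ dist y y' ↔ Real.cosh (dist x x') ≤ Real.cosh (dist y y') := by
  rw [Real.cosh_le_cosh, abs_of_nonneg dist_nonneg, abs_of_nonneg dist_nonneg]

lemma normSq_coe_eq (z : ℍ) : normSq z = z.re ^ 2 + z.im ^ 2 := by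
  rw [normSq_apply, coe_re, coe_im, sq, sq]

lemma cosh_dist_eq_normSq (z w : ℍ) :
    Real.cosh (dist z w) = (normSq z + normSq w - 2 * z.re * w.re) / (2 * z.im * w.im) := by
  rw [cosh_dist', normSq_coe_eq, normSq_coe_eq]
  ring

lemma cosh_dist_S_smul (z w : ℍ) :
    Real.cosh (dist z (S • w)) =
      (normSq z * normSq w + 1 + 2 * z.re * w.re) / (2 * z.im * w.im) := by
  have hw : normSq w ≠ 0 := normSq_ne_zero w
  have hre : (S • w).re = -w.re / normSq w := by
    simp [modular_S_smul, inv_re, neg_div, -sl_moeb]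
  have him : (S • w).im = w.im / normSq w := by simp [modular_S_smul, neg_div, -sl_moeb]
  have hnorm : normSq (S • w : ℍ) = (normSq w)⁻¹ := by simp [modular_S_smul, -sl_moeb]
  rw [cosh_dist_eq_normSq, hre, him, hnorm]
  field_simp
  ring

lemma dist_S_smul_comm (z w : ℍ) : dist z (S • w) = dist w (S • z) := by
  refine Real.cosh_strictMonoOn.injOn (Set.mem_Ici.2 dist_nonneg) (Set.mem_Ici.2 dist_nonneg) ?_
  rw [cosh_dist_S_smul, cosh_dist_S_smul]
  ring

lemma dist_le_dist_iff_abs_re_sub_le {z w w' : ℍ} (him : w.im = w'.im) :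
    dist z w ≤ dist z w' ↔ |z.re - w.re| ≤ |z.re - w'.re| := by
  rw [dist_le_dist_iff_cosh_le_cosh, cosh_dist', cosh_dist', him,
    div_le_div_iff_of_pos_right (by positivity), add_le_add_iff_right, add_le_add_iff_right,
    sq_le_sq]

lemma dist_S_smul_le_dist_S_smul_iff {z w w' : ℍ} (him : w.im = w'.im) :
    dist z (S • w) ≤ dist z (S • w') ↔
      0 ≤ (w'.re - w.re) * (normSq z * (w.re + w'.re) + 2 * z.re) := by
  rw [dist_le_dist_iff_cosh_le_cosh, cosh_dist_S_smul, cosh_dist_S_smul, him,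
    div_le_div_iff_of_pos_right (by positivity), ← sub_nonneg, normSq_coe_eq w, normSq_coe_eq w',
    him]
  ring_nf

lemma sq_mul_im_smul_mul_im_le_abs_det (g : GL (Fin 2) ℝ) (z : ℍ) :
    g 1 0 ^ 2 * (g • z).im * z.im ≤ |g.det.val| := by
  have hpos : 0 < normSq (denom g z) := normSq_denom_pos _ z.im_ne_zero
  rw [UpperHalfPlane.im_smul_eq_div_normSq]
  calc g 1 0 ^ 2 * (|g.det.val| * z.im / normSq (denom g z)) * z.im
      = |g.det.val| * ((g 1 0 * z.im) ^ 2 / normSq (denom g z)) := by ring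
    _ ≤ |g.det.val| :=
      mul_le_of_le_one_right (abs_nonneg _) ((div_le_one hpos).2 (c_mul_im_sq_le_normSq_denom g z))

lemma dist_le_dist_of_four_mul_im_mul_im_le_one {z w v : ℍ} (hz : 3 ≤ 4 * z.im ^ 2)
    (hw : 3 ≤ 4 * w.im ^ 2) (hre : |z.re - w.re| ≤ 1 / 2) (hv : 4 * v.im * w.im ≤ 1) :
    dist z w ≤ dist z v := by
  have hre' : (z.re - w.re) ^ 2 ≤ 1 / 4 := by
    calc (z.re - w.re) ^ 2 = |z.re - w.re| ^ 2 := (sq_abs _).symm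
      _ ≤ (1 / 2) ^ 2 := by gcongr
      _ = 1 / 4 := by norm_num
  rw [dist_le_dist_iff_cosh_le_cosh, cosh_dist', cosh_dist']
  calc ((z.re - w.re) ^ 2 + z.im ^ 2 + w.im ^ 2) / (2 * z.im * w.im)
      ≤ 4 * z.im ^ 2 * w.im ^ 2 / (2 * z.im * w.im) := by gcongr; nlinarith
    _ = z.im * (4 * v.im * w.im) / (2 * v.im) := by field_simp
    _ ≤ z.im * 1 / (2 * v.im) := by gcongr
    _ = z.im ^ 2 / (2 * z.im * v.im) := by field_simp
    _ ≤ ((z.re - v.re) ^ 2 + z.im ^ 2 + v.im ^ 2) / (2 * z.im * v.im) := by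
      gcongr; linarith [sq_nonneg (z.re - v.re), sq_nonneg v.im]

end Distance

section Translates

open UpperHalfPlane ModularGroup Complex
open scoped Modular

variable {z w : ℍ}

lemma dist_T_zpow_sign_smul_le (hz : |z.re| ≤ 1 / 2) (hw : |w.re| ≤ 1 / 2) (n : ℤ) :
    dist z (T ^ n.sign • w) ≤ dist z (T ^ n • w) := by
  rw [dist_le_dist_iff_abs_re_sub_le (by simp only [im_T_zpow_smul]), re_T_zpow_smul,
    re_T_zpow_smul, ← sq_le_sq]
  rw [abs_le] at hz hw
  rcases lt_trichotomy n 0 with hn | rfl | hn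
  · have hn' : (n : ℝ) ≤ -1 := by exact_mod_cast Int.le_sub_one_of_lt hn
    rw [Int.sign_eq_neg_one_of_neg hn]
    push_cast
    nlinarith
  · rfl
  · have hn' : (1 : ℝ) ≤ n := by exact_mod_cast hn
    rw [Int.sign_eq_one_of_pos hn]
    push_cast
    nlinarith

lemma abs_re_le_normSq (hz : 3 ≤ 4 * z.im ^ 2) : |z.re| ≤ normSq z := by
  rw [normSq_coe_eq, abs_le]
  constructor <;> nlinarith [sq_nonneg (z.re + 1 / 2), sq_nonneg (z.re - 1 / 2)]

lemma dist_S_T_zpow_sign_smul_le (hz : 3 ≤ 4 * z.im ^ 2) (hw : |w.re| ≤ 1 / 2) (n : ℤ) :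
    dist z (S • T ^ n.sign • w) ≤ dist z (S • T ^ n • w) := by
  rw [dist_S_smul_le_dist_S_smul_iff (by simp only [im_T_zpow_smul]), re_T_zpow_smul,
    re_T_zpow_smul]
  have hnorm := abs_le.1 (abs_re_le_normSq hz)
  rw [abs_le] at hw
  have : n ≤ -2 ∨ n = n.sign ∨ 2 ≤ n := by
    lia
  rcases this with hn | hn | hn
  · have hn' : (n : ℝ) ≤ -2 := by exact_mod_cast hn
    rw [Int.sign_eq_neg_one_of_neg (by lia)]
    push_cast
    exact mul_nonneg_of_nonpos_of_nonpos (by linarith) (by nlinarith)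
  · rw [← hn, sub_self, zero_mul]
  · have hn' : (2 : ℝ) ≤ n := by exact_mod_cast hn
    rw [Int.sign_eq_one_of_pos (by lia)]
    push_cast
    exact mul_nonneg (by linarith) (by nlinarith)

lemma dist_T_zpow_sign_S_T_zpow_sign_smul_le (hz : z ∈ 𝒟) (hw : w ∈ 𝒟) (m n : ℤ) :
    dist (T ^ m.sign • z) (S • T ^ n.sign • w) ≤ dist (T ^ m • z) (S • T ^ n • w) := by
  have hz_im := three_le_four_mul_im_sq_of_mem_fd hz
  have hw_im := three_le_four_mul_im_sq_of_mem_fd hw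
  calc dist (T ^ m.sign • z) (S • T ^ n.sign • w)
      ≤ dist (T ^ m.sign • z) (S • T ^ n • w) :=
        dist_S_T_zpow_sign_smul_le (by rwa [im_T_zpow_smul]) hw.2 n
    _ = dist (T ^ n • w) (S • T ^ m.sign • z) := dist_S_smul_comm _ _
    _ ≤ dist (T ^ n • w) (S • T ^ m • z) :=
        dist_S_T_zpow_sign_smul_le (by rwa [im_T_zpow_smul]) hz.2 m
    _ = dist (T ^ m • z) (S • T ^ n • w) := dist_S_smul_comm _ _

lemma dist_T_zpow_S_smul_le_of_mul_pos (hz : |z.re| ≤ 1 / 2) (hw : |w.re| ≤ 1 / 2) {m n : ℤ}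
    (hmn : 0 < m * n) : dist (T ^ m • z) (S • w) ≤ dist (T ^ m • z) (S • T ^ n • w) := by
  rw [dist_S_smul_le_dist_S_smul_iff (by simp only [im_T_zpow_smul]), re_T_zpow_smul,
    re_T_zpow_smul]
  have hnorm := normSq_nonneg ((T ^ m • z : ℍ) : ℂ)
  rw [abs_le] at hz hw
  rcases pos_and_pos_or_neg_and_neg_of_mul_pos hmn with ⟨hm, hn⟩ | ⟨hm, hn⟩
  · have hm' : (1 : ℝ) ≤ m := by exact_mod_cast hm
    have hn' : (1 : ℝ) ≤ n := by exact_mod_cast hn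
    exact mul_nonneg (by linarith) (add_nonneg (mul_nonneg hnorm (by linarith)) (by linarith))
  · have hm' : (m : ℝ) ≤ -1 := by exact_mod_cast Int.le_sub_one_of_lt hm
    have hn' : (n : ℝ) ≤ -1 := by exact_mod_cast Int.le_sub_one_of_lt hn
    exact mul_nonneg_of_nonpos_of_nonpos (by linarith)
      (add_nonpos (mul_nonpos_of_nonneg_of_nonpos hnorm (by linarith)) (by linarith))

lemma dist_le_dist_S_T_zpow_smul (hz : z ∈ 𝒟) (hw : w ∈ 𝒟) {n : ℤ} (hn : |n| = 1) :
    dist z w ≤ dist z (S • T ^ n • w) := by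
  have hz_norm : 1 ≤ normSq z := hz.1
  have hw_norm : 1 ≤ normSq w := hw.1
  have hz_re := abs_le.1 hz.2
  have hw_re := abs_le.1 hw.2
  have hn_sq : (n : ℝ) ^ 2 = 1 := by
    rw [← sq_abs, ← Int.cast_abs, hn, Int.cast_one, one_pow]
  have hnormT : normSq (T ^ n • w : ℍ) = normSq w + 2 * n * w.re + 1 := by
    rw [normSq_coe_eq, normSq_coe_eq, re_T_zpow_smul, im_T_zpow_smul]
    linear_combination hn_sq
  have hprod : 0 ≤ (1 + 2 * n * w.re) * (normSq z + 2 * n * z.re) := by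
    rcases eq_or_eq_neg_of_abs_eq hn with rfl | rfl <;> push_cast <;>
      exact mul_nonneg (by linarith) (by linarith)
  rw [dist_le_dist_iff_cosh_le_cosh, cosh_dist_S_smul, cosh_dist_eq_normSq, im_T_zpow_smul,
    re_T_zpow_smul, hnormT]
  gcongr
  -- The two sides differ by `(|z|² - 1) * (|w|² - 1)` plus the product in `hprod`.
  linear_combination mul_nonneg (sub_nonneg.2 hz_norm) (sub_nonneg.2 hw_norm) + hprod +
    4 * z.re * w.re * hn_sq

end Translates

section Cover

open UpperHalfPlane ModularGroup Complex
open scoped Modular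

lemma modularFundClosure_eq_fd : modularFundClosure = 𝒟 := by
  ext z
  simp only [modularFundClosure, fd, Set.mem_ofPred_eq, normSq_eq_norm_sq,
    one_le_sq_iff₀ (norm_nonneg _), and_comm]

lemma Lmat_eq_T_mul_S_mul_T : Lmat = T * S * T := by
  decide

/-- The set `Γ₁ = {I, T, L, S}` of elements which suffice to compute distances between orbits of
points of the fundamental domain. -/
def coverSet : Finset SL(2, ℤ) := {1, Tmat, Lmat, Smat}

lemma coverSet_nonempty : coverSet.Nonempty := Finset.insert_nonempty _ _

/-- The distance between the finite sets `Γ₁ • z` and `Γ₁ • w`, to be compared with the distance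
between the full orbits of `z` and `w`. -/
def coverDist (z w : ℍ) : ℝ :=
  (coverSet ×ˢ coverSet).inf' (coverSet_nonempty.product coverSet_nonempty)
    fun p => dist (p.1 • z) (p.2 • w)

lemma coverDist_le (z w : ℍ) {p q : SL(2, ℤ)} (hp : p ∈ coverSet) (hq : q ∈ coverSet) :
    coverDist z w ≤ dist (p • z) (q • w) :=
  Finset.inf'_le (fun p : SL(2, ℤ) × SL(2, ℤ) => dist (p.1 • z) (p.2 • w))
    (Finset.mk_mem_product hp hq)

lemma le_coverDist {z w : ℍ} {r : ℝ}
    (h : ∀ p ∈ coverSet, ∀ q ∈ coverSet, r ≤ dist (p • z) (q • w)) : r ≤ coverDist z w :=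
  Finset.le_inf' _ _ fun p hp =>
    h p.1 (Finset.mem_product.1 hp).1 p.2 (Finset.mem_product.1 hp).2

lemma coverDist_comm (z w : ℍ) : coverDist z w = coverDist w z := by
  have key (z w : ℍ) : coverDist z w ≤ coverDist w z :=
    le_coverDist fun p hp q hq => dist_comm (q • z) (p • w) ▸ coverDist_le z w hq hp
  exact le_antisymm (key z w) (key w z)

lemma coverDist_le_dist (z w : ℍ) : coverDist z w ≤ dist z w := by
  simpa only [one_smul] using coverDist_le z w (p := 1) (q := 1) (by decide) (by decide)

lemma coverDist_le_dist_S_smul (z w : ℍ) : coverDist z w ≤ dist z (S • w) := by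
  simpa only [one_smul] using coverDist_le z w (p := 1) (q := S) (by decide) (by decide)

lemma coverDist_le_dist_T_smul (z w : ℍ) : coverDist z w ≤ dist z (T • w) := by
  simpa only [one_smul] using coverDist_le z w (p := 1) (q := T) (by decide) (by decide)

lemma coverDist_le_dist_T_inv_S_T_smul (z w : ℍ) :
    coverDist z w ≤ dist (T⁻¹ • z) (S • T • w) := by
  rw [← dist_smul_eq_dist_inv_smul, smul_smul, smul_smul, ← Lmat_eq_T_mul_S_mul_T]
  simpa only [one_smul] using coverDist_le z w (p := 1) (q := Lmat) (by decide) (by decide)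

variable {z w : ℍ}

lemma coverDist_le_dist_T_zpow_smul (hz : |z.re| ≤ 1 / 2) (hw : |w.re| ≤ 1 / 2) (n : ℤ) :
    coverDist z w ≤ dist z (T ^ n • w) := by
  refine le_trans ?_ (dist_T_zpow_sign_smul_le hz hw n)
  rcases n.sign_trichotomy with hn | hn | hn <;> rw [hn]
  · simpa only [zpow_one] using coverDist_le_dist_T_smul z w
  · simpa only [zpow_zero, one_smul] using coverDist_le_dist z w
  · rw [zpow_neg_one, dist_smul_eq_dist_inv_smul, inv_inv, dist_comm, coverDist_comm]
    exact coverDist_le_dist_T_smul w z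

lemma coverDist_le_dist_S_T_zpow_smul (hz : z ∈ 𝒟) (hw : w ∈ 𝒟) (n : ℤ) :
    coverDist z w ≤ dist z (S • T ^ n • w) := by
  refine le_trans ?_ (dist_S_T_zpow_sign_smul_le (three_le_four_mul_im_sq_of_mem_fd hz) hw.2 n)
  rcases n.sign_trichotomy with hn | hn | hn <;> rw [hn]
  · exact (coverDist_le_dist z w).trans (dist_le_dist_S_T_zpow_smul hz hw rfl)
  · simpa only [zpow_zero, one_smul] using coverDist_le_dist_S_smul z w
  · exact (coverDist_le_dist z w).trans (dist_le_dist_S_T_zpow_smul hz hw rfl)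

lemma coverDist_le_dist_T_zpow_S_T_zpow_smul (hz : z ∈ 𝒟) (hw : w ∈ 𝒟) (m n : ℤ) :
    coverDist z w ≤ dist (T ^ m • z) (S • T ^ n • w) := by
  have of_left : coverDist z w ≤ dist (T ^ m • z) (S • w) := by
    rw [coverDist_comm, dist_S_smul_comm]
    exact coverDist_le_dist_S_T_zpow_smul hw hz m
  rcases lt_trichotomy (m * n) 0 with hmn | hmn | hmn
  · refine le_trans ?_ (dist_T_zpow_sign_S_T_zpow_sign_smul_le hz hw m n)
    rcases mul_neg_iff.1 hmn with ⟨hm, hn⟩ | ⟨hm, hn⟩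
    · rw [Int.sign_eq_one_of_pos hm, Int.sign_eq_neg_one_of_neg hn, zpow_one, zpow_neg_one,
        coverDist_comm, dist_S_smul_comm]
      exact coverDist_le_dist_T_inv_S_T_smul w z
    · rw [Int.sign_eq_neg_one_of_neg hm, Int.sign_eq_one_of_pos hn, zpow_one, zpow_neg_one]
      exact coverDist_le_dist_T_inv_S_T_smul z w
  · rcases mul_eq_zero.1 hmn with rfl | rfl
    · simpa only [zpow_zero, one_smul] using coverDist_le_dist_S_T_zpow_smul hz hw n
    · simpa only [zpow_zero, one_smul] using of_left
  · exact of_left.trans (dist_T_zpow_S_smul_le_of_mul_pos hz.2 hw.2 hmn)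

lemma coverDist_le_dist_smul_of_c_eq_one (hz : z ∈ 𝒟) (hw : w ∈ 𝒟) {γ : SL(2, ℤ)}
    (hc : γ 1 0 = 1) : coverDist z w ≤ dist z (γ • w) := by
  rw [g_eq_of_c_eq_one hc, mul_smul, mul_smul, dist_smul_eq_dist_inv_smul, ← zpow_neg]
  exact coverDist_le_dist_T_zpow_S_T_zpow_smul hz hw _ _

lemma coverDist_le_dist_smul_of_two_le_abs_c (hz : z ∈ 𝒟) (hw : w ∈ 𝒟) {γ : SL(2, ℤ)}
    (hc : 2 ≤ |γ 1 0|) : coverDist z w ≤ dist z (γ • w) := by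
  set n : ℤ := round (z.re - w.re)
  have hre : |z.re - (T ^ n • w).re| ≤ 1 / 2 := by
    rw [re_T_zpow_smul, ← sub_sub]
    exact abs_sub_round _
  have hc_sq : (4 : ℝ) ≤ (γ 1 0 : ℝ) ^ 2 := by
    exact_mod_cast (by nlinarith [sq_abs (γ 1 0)] : 4 ≤ γ 1 0 ^ 2)
  have him : 4 * (γ • w).im * (T ^ n • w).im ≤ 1 := by
    have hle : (γ 1 0 : ℝ) ^ 2 * (γ • w).im * w.im ≤ 1 := by
      simpa using sq_mul_im_smul_mul_im_le_abs_det (γ : GL (Fin 2) ℝ) w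
    rw [im_T_zpow_smul]
    exact le_trans (by gcongr) hle
  have hw_im : 3 ≤ 4 * (T ^ n • w).im ^ 2 := by
    rw [im_T_zpow_smul]
    exact three_le_four_mul_im_sq_of_mem_fd hw
  exact (coverDist_le_dist_T_zpow_smul hz.2 hw.2 n).trans
    (dist_le_dist_of_four_mul_im_mul_im_le_one (three_le_four_mul_im_sq_of_mem_fd hz) hw_im hre him)

lemma coverDist_le_dist_smul (hz : z ∈ 𝒟) (hw : w ∈ 𝒟) (γ : SL(2, ℤ)) :
    coverDist z w ≤ dist z (γ • w) := by
  have hcases : γ 1 0 = 0 ∨ γ 1 0 = 1 ∨ (-γ) 1 0 = 1 ∨ 2 ≤ |γ 1 0| := by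
    rw [Matrix.SpecialLinearGroup.coe_neg, Matrix.neg_apply]
    rcases abs_cases (γ 1 0) with habs | habs <;> lia
  rcases hcases with hc | hc | hc | hc
  · obtain ⟨n, hn⟩ := exists_eq_T_zpow_of_c_eq_zero hc
    exact hn w ▸ coverDist_le_dist_T_zpow_smul hz.2 hw.2 n
  · exact coverDist_le_dist_smul_of_c_eq_one hz hw hc
  · exact SL_neg_smul γ w ▸ coverDist_le_dist_smul_of_c_eq_one hz hw hc
  · exact coverDist_le_dist_smul_of_two_le_abs_c hz hw hc

end Cover

/-- For all `z₁, z₂` in the closure of the standard fundamental domain of `SL(2,ℤ)`,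
`inf_{γ ∈ SL(2,ℤ)} d(z₁, γ·z₂) = min_{γ₁,γ₂ ∈ Γ₁} d(γ₁·z₁, γ₂·z₂)` where
`Γ₁ = {I, T, L, S}`. -/
theorem modular_radical_geodesic_cover (z₁ z₂ : ℍ)
    (h₁ : z₁ ∈ modularFundClosure) (h₂ : z₂ ∈ modularFundClosure) :
    (⨅ γ : SL(2, ℤ), dist z₁ (γ • z₂)) =
      (({1, Tmat, Lmat, Smat} : Finset SL(2, ℤ)) ×ˢ
          ({1, Tmat, Lmat, Smat} : Finset SL(2, ℤ))).inf'
        ((Finset.insert_nonempty _ _).product (Finset.insert_nonempty _ _))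
        (fun p => dist (p.1 • z₁) (p.2 • z₂)) := by
  change _ = coverDist z₁ z₂
  rw [modularFundClosure_eq_fd] at h₁ h₂
  have bdd : BddBelow (Set.range fun γ : SL(2, ℤ) => dist z₁ (γ • z₂)) :=
    ⟨0, Set.forall_mem_range.2 fun _ => dist_nonneg⟩
  refine le_antisymm (le_coverDist fun p _ q _ => ?_) (le_ciInf (coverDist_le_dist_smul h₁ h₂))
  calc ⨅ γ : SL(2, ℤ), dist z₁ (γ • z₂)
      ≤ dist z₁ ((p⁻¹ * q) • z₂) := ciInf_le bdd (p⁻¹ * q)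
    _ = dist (p • z₁) (q • z₂) := by rw [mul_smul, dist_smul_eq_dist_inv_smul, inv_inv]

end
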